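/- Let α, γ be real numbers with γ not an integer. Then for all real t: ( (1−α)(γ−α−1) t² / ( (γ−2)(1−γ)(2−γ)(3−γ) ) ) · ₁F₁(α; γ; t) · ₁F₁(2−α; 4−γ; −t) + ₁F₁(1−α; 2−γ; −t) · ₁F₁(α−1; γ−2; t) = 1. (Here (1−γ)₃ = (1−γ)(2−γ)(3−γ).) -/

import Mathlib

open Finset

/-- Pochhammer symbol `(a)ₙ = a(a+1)⋯(a+n-1)` for natural `n`. -/
noncomputable def poch (a : ℝ) (n : ℕ) : ℝ := Polynomial.eval a (ascPochhammer ℝ n)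

/-- Pochhammer symbol `(a)ₖ` for integer `k`: for `k ≥ 0` the ascending product,
and `(a)₋ₖ = (-1)ᵏ/(1-a)ₖ` for `k ≥ 0`. -/
noncomputable def pochZ (a : ℝ) (k : ℤ) : ℝ :=
  if 0 ≤ k then poch a k.toNat else (-1) ^ (-k).toNat / poch (1 - a) (-k).toNat

/-- The (generally non-terminating) Clausen series `₃F₂(a,b,c;d,e;1)`. -/
noncomputable def F32 (a b c d e : ℝ) : ℝ :=
  ∑' n : ℕ, poch a n * poch b n * poch c n / (poch d n * poch e n * n.factorial)

/-- A terminating `₃F₂(a,b,c;d,e;1)` summed over `k = 0, …, N`. -/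
noncomputable def F32sum (N : ℕ) (a b c d e : ℝ) : ℝ :=
  ∑ k ∈ Finset.range (N + 1),
    poch a k * poch b k * poch c k / (poch d k * poch e k * k.factorial)

/-- The Kummer confluent hypergeometric function `₁F₁(a;b;x)`. -/
noncomputable def F11 (a b x : ℝ) : ℝ :=
  ∑' n : ℕ, poch a n * x ^ n / (poch b n * n.factorial)

open Filter Topology

/-- Coefficients of the Kummer series. -/
noncomputable def kcf (a b : ℝ) (n : ℕ) : ℝ := poch a n / (poch b n * n.factorial)

lemma poch_succ_right (a : ℝ) (n : ℕ) : poch a (n + 1) = poch a n * (a + n) := by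
  simp [poch, ascPochhammer_succ_eval]

lemma poch_succ_left (a : ℝ) (n : ℕ) : poch a (n + 1) = a * poch (a + 1) n := by
  simp [poch, ascPochhammer_succ_left, Polynomial.eval_comp]

lemma poch_zero' (a : ℝ) : poch a 0 = 1 := by simp [poch]

lemma poch_ne {b : ℝ} (hb : ∀ n : ℕ, b + n ≠ 0) (n : ℕ) : poch b n ≠ 0 := by
  induction n with
  | zero => simp [poch_zero']
  | succ n ih => rw [poch_succ_right]; exact mul_ne_zero ih (hb n)

lemma shift_ne {b : ℝ} (hb : ∀ n : ℕ, b + n ≠ 0) : ∀ n : ℕ, (b + 1) + n ≠ 0 := by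
  intro n h
  apply hb (n + 1)
  push_cast
  linarith

lemma kcf_zero (a b : ℝ) : kcf a b 0 = 1 := by simp [kcf, poch_zero']

lemma kcf_succ (a b : ℝ) (n : ℕ) :
    kcf a b (n + 1) = kcf a b n * ((a + n) / (b + n) * (1 / ((n : ℝ) + 1))) := by
  simp only [kcf, poch_succ_right, Nat.factorial_succ]
  push_cast
  simp only [div_eq_mul_inv, mul_inv]
  ring

lemma kcf_succ' (a b : ℝ) (n : ℕ) :
    ((n : ℝ) + 1) * kcf a b (n + 1) = a / b * kcf (a + 1) (b + 1) n := by
  simp only [kcf, poch_succ_left, Nat.factorial_succ]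
  have : (n : ℝ) + 1 ≠ 0 := by positivity
  push_cast
  simp only [div_eq_mul_inv, mul_inv]
  field_simp

lemma F11_eq (a b x : ℝ) : F11 a b x = ∑' n, kcf a b n * x ^ n := by
  unfold F11 kcf
  congr 1
  ext n
  ring

lemma kcf_summable (a b x : ℝ) : Summable fun n => kcf a b n * x ^ n := by
  have h1 : Tendsto (fun n : ℕ => (a + n) / (b + n)) atTop (𝓝 1) := by
    simpa using tendsto_add_mul_div_add_mul_atTop_nhds a b (1 : ℝ) (d := 1) one_ne_zero
  have h2 : Tendsto (fun n : ℕ => (a + n) / (b + n) * (1 / ((n : ℝ) + 1)) * x) atTop (𝓝 0) := by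
    simpa using (h1.mul tendsto_one_div_add_atTop_nhds_zero_nat).mul_const x
  have h3 := h2.norm
  rw [norm_zero] at h3
  apply summable_of_ratio_norm_eventually_le (r := 1 / 2) (by norm_num)
  filter_upwards [h3.eventually_le_const (show (0 : ℝ) < 1 / 2 by norm_num)] with n hn
  have : kcf a b (n + 1) * x ^ (n + 1) =
      ((a + n) / (b + n) * (1 / ((n : ℝ) + 1)) * x) * (kcf a b n * x ^ n) := by
    rw [kcf_succ]; ring
  rw [this, norm_mul]
  gcongr

lemma F11_zero (a b : ℝ) : F11 a b 0 = 1 := by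
  rw [F11_eq, (kcf_summable a b 0).tsum_eq_zero_add]
  simp [kcf_zero]

lemma F11_hasDerivAt (a b x : ℝ) :
    HasDerivAt (F11 a b) (a / b * F11 (a + 1) (b + 1) x) x := by
  have key : ∀ n : ℕ, ∀ y : ℝ, kcf a b (n + 1) * (((n + 1 : ℕ) : ℝ) * y ^ (n + 1 - 1)) =
      a / b * (kcf (a + 1) (b + 1) n * y ^ n) := by
    intro n y
    have := kcf_succ' a b n
    rw [Nat.add_sub_cancel]
    push_cast
    linear_combination y ^ n * this
  have hs : ∀ y : ℝ, Summable fun n : ℕ => kcf a b n * ((n : ℝ) * y ^ (n - 1)) := by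
    intro y
    rw [← summable_nat_add_iff 1]
    simp only [key]
    exact (kcf_summable _ _ y).mul_left _
  have hd : HasDerivAt (fun z => ∑' n, kcf a b n * z ^ n)
      (∑' n : ℕ, kcf a b n * ((n : ℝ) * x ^ (n - 1))) x := by
    refine hasDerivAt_tsum_of_isPreconnected
      (g := fun n z => kcf a b n * z ^ n)
      (g' := fun n z => kcf a b n * ((n : ℝ) * z ^ (n - 1)))
      (u := fun n : ℕ => ‖kcf a b n * ((n : ℝ) * (|x| + 1) ^ (n - 1))‖)
      (t := Metric.ball (0 : ℝ) (|x| + 1)) (y₀ := 0) ?_ Metric.isOpen_ball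
      (convex_ball _ _).isPreconnected ?_ ?_ ?_ ?_ ?_
    · exact (hs _).norm
    · intro n y _
      exact (hasDerivAt_pow n y).const_mul _
    · intro n y hy
      have hy' : |y| ≤ |x| + 1 := by
        have := Metric.mem_ball.1 hy
        rw [Real.dist_eq, sub_zero] at this
        exact this.le
      have h0 : |(|x| + 1)| = |x| + 1 := abs_of_pos (by positivity)
      simp only [norm_mul, norm_pow, Real.norm_eq_abs, h0]
      gcongr
    · simp; positivity
    · exact kcf_summable a b 0
    · simp
  have e : (F11 a b) = fun z => ∑' n, kcf a b n * z ^ n := funext (F11_eq a b)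
  rw [e]
  convert hd using 1
  rw [(hs x).tsum_eq_zero_add, F11_eq, ← tsum_mul_left]
  simp only [key]
  simp

lemma F11_succ (a b x : ℝ) : F11 a b x = 1 + x * ∑' n, kcf a b (n + 1) * x ^ n := by
  rw [F11_eq, (kcf_summable a b x).tsum_eq_zero_add, ← tsum_mul_left]
  simp only [kcf_zero, pow_zero, mul_one]
  congr 2
  ext n
  ring

lemma kcf_summable_succ (a b x : ℝ) : Summable fun n => kcf a b (n + 1) * x ^ n := by
  have h := ((kcf_summable (a + 1) (b + 1) x).mul_left (a / b)).norm
  refine Summable.of_norm_bounded h ?_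
  intro n
  have h1 := kcf_succ' a b n
  have h2 : a / b * (kcf (a + 1) (b + 1) n * x ^ n) =
      ((n : ℝ) + 1) * (kcf a b (n + 1) * x ^ n) := by
    linear_combination -x ^ n * h1
  rw [h2, norm_mul ((n : ℝ) + 1)]
  apply le_mul_of_one_le_left (norm_nonneg _)
  rw [Real.norm_eq_abs, abs_of_pos (by positivity)]
  linarith [(Nat.cast_nonneg n : (0 : ℝ) ≤ n)]

lemma rel1 (A B x : ℝ) (hB : ∀ n : ℕ, B + n ≠ 0) :
    F11 (A + 1) (B + 1) x =
      F11 A B x + (B - A) / (B * (B + 1)) * x * F11 (A + 1) (B + 2) x := by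
  rw [F11_succ (A + 1) (B + 1), F11_succ A B, F11_eq (A + 1) (B + 2)]
  have hc : ∀ n, kcf (A + 1) (B + 1) (n + 1) =
      kcf A B (n + 1) + (B - A) / (B * (B + 1)) * kcf (A + 1) (B + 2) n := by
    intro n
    have h1 := poch_succ_left (B + 1) n
    rw [poch_succ_right, show B + 1 + 1 = B + 2 by ring] at h1
    have hb1 := shift_ne hB
    have n0 : B ≠ 0 := by simpa using hB 0
    have n1 : B + 1 ≠ 0 := by simpa using hb1 0
    have n2 := hb1 n
    have n3 := poch_ne hb1 n
    have n4 : poch (B + 2) n ≠ 0 := by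
      have := poch_ne (shift_ne hb1) n
      rwa [show B + 1 + 1 = B + 2 by ring] at this
    have n5 : (n : ℝ) + 1 ≠ 0 := by positivity
    have n6 : (n.factorial : ℝ) ≠ 0 := by positivity
    have h2 : poch (B + 1) n = (B + 1) * poch (B + 2) n / (B + 1 + n) := by
      field_simp; linear_combination h1
    have h3 := poch_succ_right (A + 1) n
    unfold kcf
    rw [h3, poch_succ_left A, poch_succ_left B, poch_succ_left (B + 1), h2,
      Nat.factorial_succ, show B + 1 + 1 = B + 2 by ring]
    push_cast
    field_simp
    ring
  simp only [hc, add_mul]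
  rw [Summable.tsum_add (kcf_summable_succ A B x)
    (by simpa only [mul_assoc] using (kcf_summable (A + 1) (B + 2) x).mul_left _)]
  simp only [mul_assoc]
  simp only [tsum_mul_left]
  ring

lemma rel2 (A B x : ℝ) (hB : ∀ n : ℕ, B + n ≠ 0) :
    (B + 1) * F11 A (B + 2) x + x * (A / (B + 2) * F11 (A + 1) (B + 3) x) =
      (B + 1) * F11 A (B + 1) x := by
  rw [F11_succ A (B + 1), F11_succ A (B + 2), F11_eq (A + 1) (B + 3)]
  have hc : ∀ n, (B + 1) * kcf A (B + 1) (n + 1) =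
      (B + 1) * kcf A (B + 2) (n + 1) + A / (B + 2) * kcf (A + 1) (B + 3) n := by
    intro n
    have h0 := kcf_succ' A (B + 2) n
    rw [show B + 2 + 1 = B + 3 by ring] at h0
    rw [← h0]
    have h1 := poch_succ_left (B + 1) (n + 1)
    rw [poch_succ_right, show B + 1 + 1 = B + 2 by ring] at h1
    have hb1 := shift_ne hB
    have n1 : B + 1 ≠ 0 := by simpa using hb1 0
    have n2 := hb1 (n + 1)
    have n3 := poch_ne hb1 (n + 1)
    have n4 : poch (B + 2) (n + 1) ≠ 0 := by
      have := poch_ne (shift_ne hb1) (n + 1)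
      rwa [show B + 1 + 1 = B + 2 by ring] at this
    have n6 : ((n + 1).factorial : ℝ) ≠ 0 := by positivity
    unfold kcf
    push_cast at *
    field_simp
    linear_combination -poch A (n + 1) * h1
  have hs := congrArg tsum (funext fun n => congrArg (· * x ^ n) (hc n))
  simp only [add_mul (_ * _), mul_assoc] at hs
  rw [Summable.tsum_add ((kcf_summable_succ A (B + 2) x).mul_left _)
    ((kcf_summable (A + 1) (B + 3) x).mul_left (A / (B + 2)))] at hs
  simp only [tsum_mul_left] at hs
  linear_combination -x * hs

theorem Kummer_example3 (α γ : ℝ) (hγ : ∀ k : ℤ, γ ≠ (k : ℝ)) (t : ℝ) :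
    (1 - α) * (γ - α - 1) * t ^ 2 / ((γ - 2) * ((1 - γ) * (2 - γ) * (3 - γ))) *
        F11 α γ t * F11 (2 - α) (4 - γ) (-t) +
      F11 (1 - α) (2 - γ) (-t) * F11 (α - 1) (γ - 2) t = 1 := by
  have hB1 : ∀ n : ℕ, (γ - 2) + n ≠ 0 := by
    intro n h
    apply hγ (2 - n)
    push_cast
    linarith
  have hB2 : ∀ n : ℕ, (2 - γ) + n ≠ 0 := by
    intro n h
    apply hγ (2 + n)
    push_cast
    linarith
  have m1 : 1 - γ ≠ 0 := fun h => hγ 1 (by push_cast; linarith)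
  have m2 : 2 - γ ≠ 0 := fun h => hγ 2 (by push_cast; linarith)
  have m3 : 3 - γ ≠ 0 := fun h => hγ 3 (by push_cast; linarith)
  have m4 : γ - 2 ≠ 0 := fun h => hγ 2 (by push_cast; linarith)
  have m5 : γ - 1 ≠ 0 := fun h => hγ 1 (by push_cast; linarith)
  set W : ℝ → ℝ := fun t =>
    (1 - α) * (γ - α - 1) * t ^ 2 / ((γ - 2) * ((1 - γ) * (2 - γ) * (3 - γ))) *
        F11 α γ t * F11 (2 - α) (4 - γ) (-t) +
      F11 (1 - α) (2 - γ) (-t) * F11 (α - 1) (γ - 2) t with hW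
  have hd : ∀ x, HasDerivAt W 0 x := by
    intro x
    have d1 := F11_hasDerivAt α γ x
    have d2 := F11_hasDerivAt (α - 1) (γ - 2) x
    have d3 := (F11_hasDerivAt (2 - α) (4 - γ) (-x)).comp x (hasDerivAt_neg x)
    have d4 := (F11_hasDerivAt (1 - α) (2 - γ) (-x)).comp x (hasDerivAt_neg x)
    have d0 := ((hasDerivAt_pow 2 x).const_mul ((1 - α) * (γ - α - 1))).div_const
      ((γ - 2) * ((1 - γ) * (2 - γ) * (3 - γ)))
    have d := ((d0.mul d1).mul d3).add (d4.mul d2)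
    refine d.congr_deriv ?_
    have r1 := rel1 (α - 1) (γ - 2) x hB1
    have r2 := rel2 α (γ - 2) x hB1
    have r3 := rel1 (1 - α) (2 - γ) (-x) hB2
    have r4 := rel2 (2 - α) (2 - γ) (-x) hB2
    rw [show α - 1 + 1 = α by ring, show γ - 2 + 1 = γ - 1 by ring,
      show γ - 2 + 2 = γ by ring] at r1
    rw [show γ - 2 + 3 = γ + 1 by ring, show γ - 2 + 1 = γ - 1 by ring,
      show γ - 2 + 2 = γ by ring] at r2
    rw [show 1 - α + 1 = 2 - α by ring, show 2 - γ + 1 = 3 - γ by ring,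
      show 2 - γ + 2 = 4 - γ by ring] at r3
    rw [show 2 - γ + 3 = 4 - γ + 1 by ring, show 2 - γ + 1 = 3 - γ by ring,
      show 2 - γ + 2 = 4 - γ by ring] at r4
    simp only [Function.comp, Pi.mul_apply]
    rw [show α - 1 + 1 = α by ring, show γ - 2 + 1 = γ - 1 by ring,
      show 1 - α + 1 = 2 - α by ring, show 2 - γ + 1 = 3 - γ by ring]
    generalize α / γ * F11 (α + 1) (γ + 1) x = U at *
    generalize (2 - α) / (4 - γ) * F11 (2 - α + 1) (4 - γ + 1) (-x) = V at *
    generalize F11 α γ x = f1 at *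
    generalize F11 (α - 1) (γ - 2) x = f2 at *
    generalize F11 (2 - α) (4 - γ) (-x) = g1 at *
    generalize F11 (1 - α) (2 - γ) (-x) = g2 at *
    rw [r1] at r2 ⊢
    rw [r3] at r4 ⊢
    have key := congrArg₂ (fun u v => (1 - α) * (γ - α - 1) /
      ((γ - 2) * ((1 - γ) * (2 - γ) * (3 - γ))) * x * (g1 * u + f1 * v)) r2 r4
    refine Eq.trans ?_ (sub_eq_zero.2 key)
    push_cast
    obtain ⟨c, rfl⟩ : ∃ c, γ = c + 2 := ⟨γ - 2, by ring⟩
    have e1 : 1 - (c + 2) = -(c + 1) := by ring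
    have e2 : 2 - (c + 2) = -c := by ring
    have e3 : c + 2 - 2 = c := by ring
    have e4 : c + 2 - 1 = c + 1 := by ring
    have e5 : 3 - (c + 2) = 1 - c := by ring
    simp only [e1, e2, e3, e4, e5] at m1 m2 m3 m4 m5 ⊢
    field_simp
    ring
  have hc : W t = W 0 :=
    is_const_of_deriv_eq_zero (fun x => (hd x).differentiableAt) (fun x => (hd x).deriv) t 0
  change W t = 1
  rw [hc, hW]
  simp [F11_zero]
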